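/- Let N be a positive even integer and h ∈ (1/N)ℤ. Then for all τ = u+iv ∈ H, ξ_{1/2} ϑ̃_{N,h}(τ) = (1/√2) · ∑_{r ∈ Nℤ+h} r · e(r²τ/2); that is, 2i·v^{1/2}·conj(∂/∂conj(τ) ϑ̃_{N,h}(τ)) = (1/√2) 𝛉_{N,h}(τ), where 𝛉_{N,h}(τ) := ∑_{r ∈ Nℤ+h} r e(r²τ/2). -/

import Mathlib

open Complex MeasureTheory
open scoped Classical

noncomputable section

/-- `e(a) = exp(2πia)`. -/
def e (a : ℂ) : ℂ := Complex.exp (2 * (Real.pi : ℂ) * Complex.I * a)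

/-- The Fourier transform `F(g)(x) = ∫ g(w) e(wx) dw`. -/
def fourierT (g : ℝ → ℂ) (x : ℝ) : ℂ := ∫ w : ℝ, g w * e ((w * x : ℝ))

/-- The operator `E_σ(f)(x) = e(x²σ/2) ∫_0^x e(-w²σ/2) f(w) dw`. -/
def Eop (σ : ℂ) (f : ℝ → ℂ) (x : ℝ) : ℂ :=
  e ((x : ℂ)^2 * σ / 2) * ∫ w in (0:ℝ)..x, e (-(w : ℂ)^2 * σ / 2) * f w

/-- `ω_τ(x) = e(-x²τ/2) ∑_{m ∈ ℤ+1/2, m ≥ |x|} e(m²τ/2 + m/2)`. -/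
def omega (τ : ℂ) (x : ℝ) : ℂ :=
  e (-(x : ℂ)^2 * τ / 2) *
    ∑' m : ℤ, if |x| ≤ (m : ℝ) + 1/2 then
      e (((m : ℂ) + 1/2)^2 / 2 * τ + ((m : ℂ) + 1/2) / 2) else 0

/-- `η³(τ) = -i ∑_{m ∈ ℤ+1/2} m e(m²τ/2 + m/2)`. -/
def eta3 (τ : ℂ) : ℂ :=
  -Complex.I * ∑' m : ℤ, ((m : ℂ) + 1/2) * e (((m : ℂ) + 1/2)^2 / 2 * τ + ((m : ℂ) + 1/2) / 2)

/-- The complementary error function. -/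
def erfc (x : ℝ) : ℝ := (2 / Real.sqrt Real.pi) * ∫ t in Set.Ioi x, Real.exp (-t^2)

/-- `g⁺_τ`. -/
def gplus (τ : ℂ) (x : ℝ) : ℂ :=
  e (-(x : ℂ)^2 * τ / 2) * ((Real.sign x : ℂ) / (Complex.I * eta3 τ)) *
    ∑' m : ℤ, if |x| < (m : ℝ) + 1/2 then
      (((m : ℝ) + 1/2 - |x| : ℝ) : ℂ) * e (((m : ℂ) + 1/2)^2 / 2 * τ + ((m : ℂ) + 1/2) / 2)
    else 0

/-- `g*_τ`. -/
def gstar (τ : ℂ) (x : ℝ) : ℂ :=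
  e (-(x : ℂ)^2 * τ / 2) * ((Real.sign x : ℂ) / 2) *
    (erfc (Real.sqrt (2 * Real.pi * τ.im) * |x|) : ℂ)

/-- `g_τ = g⁺_τ - g*_τ`. -/
def gfun (τ : ℂ) (x : ℝ) : ℂ := gplus τ x - gstar τ x

/-- The operator `ξ_k f = 2i v^k conj(∂f/∂τ̄)`, with `∂/∂τ̄ = (1/2)(∂/∂u + i ∂/∂v)`. -/
def xi (k : ℝ) (f : ℂ → ℂ) (τ : ℂ) : ℂ :=
  2 * Complex.I * ((τ.im ^ k : ℝ) : ℂ) *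
    (starRingEnd ℂ) ((1/2 : ℂ) * (fderiv ℝ f τ 1 + Complex.I * fderiv ℝ f τ Complex.I))

/-- Sum of divisors function `σ₁`. -/
def sigma1 (n : ℕ) : ℕ := ∑ d ∈ Nat.divisors n, d

/-- The weight 2 Eisenstein series `E₂`. -/
def E2 (τ : ℂ) : ℂ := 1 - 24 * ∑' n : ℕ, (sigma1 (n+1) : ℂ) * e ((n + 1 : ℂ) * τ)

/-- `ϑ̃_{N,h}`. -/
def tvtheta (N : ℕ) (h : ℝ) (τ : ℂ) : ℂ :=
  (if ∃ m : ℤ, h = (m : ℝ) + 1/2 then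
      e ((h : ℂ) / 2) * E2 τ / (12 * (N : ℂ) * Complex.I * eta3 τ) else 0)
  + ∑' n : ℤ, gfun τ ((N : ℝ) * n + h)

/-- The Schwartz function `φ_τ(x,y) = √(2v)·x·e(x²τ/2 - y²τ̄/2)`. -/
def Phi (τ : ℂ) (x y : ℝ) : ℂ :=
  (Real.sqrt (2 * τ.im) : ℂ) * (x : ℂ) *
    e ((x : ℂ)^2 * τ / 2 - (y : ℂ)^2 * (starRingEnd ℂ) τ / 2)

/-- The signature (1,1) bilinear form `B((a₁,a₂),(b₁,b₂)) = a₁b₂ + a₂b₁`. -/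
def Bform (a b : ℝ × ℝ) : ℝ := a.1 * b.2 + a.2 * b.1

/-- `Z⁺_t = (t/√2, t⁻¹/√2)`. -/
def Zp (t : ℝ) : ℝ × ℝ := (t / Real.sqrt 2, t⁻¹ / Real.sqrt 2)

/-- `Z⁻_t = (t/√2, -t⁻¹/√2)`. -/
def Zm (t : ℝ) : ℝ × ℝ := (t / Real.sqrt 2, -t⁻¹ / Real.sqrt 2)

end

/-!
The operator `ξ_{1/2}` is a `∂/∂τ̄`-derivative, so it kills the part of `ϑ̃_{N,h}` built from
`E₂` and `g⁺`, which is holomorphic because `η³` has no zero on the upper half plane: `(η³)⁸`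
transforms like a modular form of weight 12 and level one and vanishes at the cusp, hence is a
multiple of the discriminant, and the multiple is not zero because `e(-τ/8) η³(τ) → 1` at `i∞`.
What remains is `-∑ g*_τ(r)`, which may be differentiated termwise. There only the `erfc` factor
depends on `v` alone; its derivative is a Gaussian, and `∂g*_τ(r)/∂τ̄` is a multiple of
`r · conj(e(r²τ/2)) / √v`.
-/

open Filter Topology Set Real
open scoped ModularForm MatrixGroups Manifold

section Exponential

lemma e_add (a b : ℂ) : e (a + b) = e a * e b := by
  simp only [e, mul_add, Complex.exp_add]

lemma e_ne_zero (a : ℂ) : e a ≠ 0 := Complex.exp_ne_zero _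

lemma e_neg (a : ℂ) : e (-a) = (e a)⁻¹ := by
  simp only [e, mul_neg, Complex.exp_neg]

lemma e_natCast_mul (n : ℕ) (a : ℂ) : e (n * a) = e a ^ n := by
  rw [e, e, ← Complex.exp_nat_mul]
  ring_nf

lemma e_intCast (n : ℤ) : e n = 1 := by
  rw [e, mul_comm, Complex.exp_int_mul_two_pi_mul_I]

lemma e_one_fourth : e (1 / 4) = I := by
  rw [e, show 2 * (π : ℂ) * I * (1 / 4) = π / 2 * I by ring, Complex.exp_pi_div_two_mul_I]

lemma differentiable_e : Differentiable ℂ e := by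
  unfold e
  fun_prop

lemma norm_e (a : ℂ) : ‖e a‖ = Real.exp (-2 * π * a.im) := by
  rw [e, Complex.norm_exp, show 2 * (π : ℂ) * I * a = ((2 * π : ℝ) : ℂ) * (I * a) by
    push_cast; ring, Complex.re_ofReal_mul]
  simp

lemma norm_e_ofReal_mul_add (t s : ℝ) (τ : ℂ) :
    ‖e (t * τ + s)‖ = Real.exp (-2 * π * (t * τ.im)) := by
  rw [norm_e]
  simp

lemma norm_e_neg_sq_mul_div_two (x : ℝ) (τ : ℂ) :
    ‖e (-(x : ℂ) ^ 2 * τ / 2)‖ = Real.exp (π * τ.im * x ^ 2) := by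
  have h := norm_e_ofReal_mul_add (-x ^ 2 / 2) 0 τ
  push_cast at h
  rw [show -(x : ℂ) ^ 2 * τ / 2 = -(x : ℂ) ^ 2 / 2 * τ + 0 by ring, h]
  ring_nf

end Exponential

section LatticeSums

lemma summable_comp_abs_mul_add {f : ℝ → ℝ} (hf : f =O[atTop] fun x ↦ x ^ (-2 : ℝ)) {ℓ : ℝ}
    (hℓ : ℓ ≠ 0) (h : ℝ) : Summable fun n : ℤ ↦ f |ℓ * n + h| := by
  have hlim : Tendsto (fun n : ℤ ↦ |ℓ * n + h|) cofinite atTop :=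
    tendsto_norm_cocompact_atTop.comp <|
      ((Homeomorph.mulLeft₀ ℓ hℓ).trans (Homeomorph.addRight h)).isClosedEmbedding.tendsto_cocompact
        |>.comp Int.tendsto_coe_cofinite
  have hsum : Summable fun n : ℤ ↦ |ℓ * n + h| ^ (-2 : ℝ) := by
    refine (((summable_one_div_int_add_rpow (h / ℓ) 2).2 one_lt_two).mul_left
      (|ℓ| ^ (-2 : ℝ))).congr fun n ↦ ?_
    rw [one_div, ← rpow_neg (abs_nonneg _), ← mul_rpow (abs_nonneg _) (abs_nonneg _), ← abs_mul,
      mul_add, mul_div_cancel₀ _ hℓ]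
  exact summable_of_isBigO hsum (hf.comp_tendsto hlim)

variable {a : ℝ} (ha : 0 < a) (k : ℕ) {ℓ : ℝ} (hℓ : ℓ ≠ 0) (h : ℝ)

include ha in
lemma pow_mul_exp_neg_mul_isBigO :
    (fun x : ℝ ↦ x ^ k * Real.exp (-a * x)) =O[atTop] fun x ↦ x ^ (-2 : ℝ) := by
  refine ((Asymptotics.isBigO_refl (fun x : ℝ ↦ x ^ k) atTop).mul
    (isLittleO_exp_neg_mul_rpow_atTop ha (-2 - k)).isBigO).trans_eventuallyEq ?_
  filter_upwards [eventually_gt_atTop 0] with x hx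
  rw [← rpow_natCast, ← rpow_add hx]
  ring_nf

include ha in
lemma pow_mul_exp_neg_mul_sq_isBigO :
    (fun x : ℝ ↦ x ^ k * Real.exp (-a * x ^ 2)) =O[atTop] fun x ↦ x ^ (-2 : ℝ) := by
  refine .trans (.of_bound 1 ?_) (pow_mul_exp_neg_mul_isBigO ha k)
  filter_upwards [eventually_ge_atTop 1] with x hx
  have hx0 : 0 ≤ x := zero_le_one.trans hx
  rw [norm_of_nonneg (by positivity), norm_of_nonneg (by positivity), one_mul]
  gcongr x ^ k * Real.exp ?_
  nlinarith [mul_nonneg ha.le (mul_nonneg hx0 (sub_nonneg.2 hx))]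

include ha hℓ in
lemma summable_abs_pow_mul_exp_neg_mul_abs :
    Summable fun n : ℤ ↦ |ℓ * n + h| ^ k * Real.exp (-a * |ℓ * n + h|) :=
  summable_comp_abs_mul_add (pow_mul_exp_neg_mul_isBigO ha k) hℓ h

include ha hℓ in
lemma summable_abs_pow_mul_exp_neg_mul_sq :
    Summable fun n : ℤ ↦ |ℓ * n + h| ^ k * Real.exp (-a * (ℓ * n + h) ^ 2) := by
  simpa only [sq_abs] using summable_comp_abs_mul_add (pow_mul_exp_neg_mul_sq_isBigO ha k) hℓ h

end LatticeSums

section HalfPlane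

lemma differentiableAt_of_forall_differentiableOn_lt_im {f : ℂ → ℂ}
    (hf : ∀ v : ℝ, 0 < v → DifferentiableOn ℂ f {w : ℂ | v < w.im}) {τ : ℂ} (hτ : 0 < τ.im) :
    DifferentiableAt ℂ f τ :=
  (hf (τ.im / 2) (half_pos hτ)).differentiableAt
    ((Complex.isOpen_im_gt _).mem_nhds (half_lt_self hτ))

end HalfPlane

section EtaCubed

open UpperHalfPlane hiding I

/-- The exponential `e(μ²τ/2 + μ/2)` with `μ = m + 1/2`, common to the series defining `η³` and
`g⁺`. -/
noncomputable def halfThetaTerm (m : ℤ) (τ : ℂ) : ℂ :=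
  e (((m : ℂ) + 1 / 2) ^ 2 / 2 * τ + ((m : ℂ) + 1 / 2) / 2)

lemma eta3_eq_tsum (τ : ℂ) : eta3 τ = -I * ∑' m : ℤ, ((m : ℂ) + 1 / 2) * halfThetaTerm m τ := rfl

lemma differentiable_halfThetaTerm (m : ℤ) : Differentiable ℂ (halfThetaTerm m) :=
  differentiable_e.comp (by fun_prop)

lemma norm_halfThetaTerm (m : ℤ) (τ : ℂ) :
    ‖halfThetaTerm m τ‖ = Real.exp (-(π * τ.im) * ((m : ℝ) + 1 / 2) ^ 2) := by
  have h := norm_e_ofReal_mul_add (((m : ℝ) + 1 / 2) ^ 2 / 2) (((m : ℝ) + 1 / 2) / 2) τ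
  push_cast at h
  rw [halfThetaTerm, h]
  ring_nf

lemma norm_intCast_add_one_div_two (m : ℤ) : ‖(m : ℂ) + 1 / 2‖ = |(m : ℝ) + 1 / 2| := by
  rw [← Real.norm_eq_abs, ← Complex.norm_real]
  push_cast
  rfl

lemma norm_mul_halfThetaTerm (m : ℤ) (τ : ℂ) : ‖((m : ℂ) + 1 / 2) * halfThetaTerm m τ‖ =
    |(m : ℝ) + 1 / 2| * Real.exp (-(π * τ.im) * ((m : ℝ) + 1 / 2) ^ 2) := by
  rw [norm_mul, norm_halfThetaTerm, norm_intCast_add_one_div_two]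

lemma summable_abs_mul_exp_neg_mul_half_sq {v : ℝ} (hv : 0 < v) :
    Summable fun m : ℤ ↦ |(m : ℝ) + 1 / 2| * Real.exp (-(π * v) * ((m : ℝ) + 1 / 2) ^ 2) := by
  simpa only [one_mul, pow_one] using
    summable_abs_pow_mul_exp_neg_mul_sq (mul_pos pi_pos hv) 1 one_ne_zero (1 / 2)

lemma differentiableAt_eta3 {τ : ℂ} (hτ : 0 < τ.im) : DifferentiableAt ℂ eta3 τ := by
  refine differentiableAt_of_forall_differentiableOn_lt_im (fun v hv ↦ ?_) hτ
  refine .const_mul (Complex.differentiableOn_tsum_of_summable_norm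
    (summable_abs_mul_exp_neg_mul_half_sq hv)
    (fun m ↦ ((differentiable_halfThetaTerm m).const_mul _).differentiableOn)
    (Complex.isOpen_im_gt v) fun m w hw ↦ ?_) _
  have hw : v < w.im := hw
  refine (norm_mul_halfThetaTerm m w).trans_le ?_
  gcongr

lemma jacobiTheta₂_add_one_div_two (τ : ℂ) : jacobiTheta₂ ((τ + 1) / 2) τ = 0 := by
  have hexp : cexp (-π * I * (τ + 2 * ((1 - τ) / 2))) = -1 := by
    rw [← Complex.exp_neg_pi_mul_I]
    ring_nf
  have hquasi : jacobiTheta₂ ((τ + 1) / 2) τ = -jacobiTheta₂ ((1 - τ) / 2) τ := by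
    rw [show (τ + 1) / 2 = (1 - τ) / 2 + τ by ring, jacobiTheta₂_add_left', hexp, neg_one_mul]
  have heven : jacobiTheta₂ ((τ + 1) / 2) τ = jacobiTheta₂ ((1 - τ) / 2) τ := by
    rw [← jacobiTheta₂_neg_left, ← jacobiTheta₂_add_left]
    ring_nf
  linear_combination (hquasi + heven) / 2

lemma halfThetaTerm_eq_jacobiTheta₂_term (m : ℤ) (τ : ℂ) :
    halfThetaTerm m τ = e (τ / 8) * I * jacobiTheta₂_term m ((τ + 1) / 2) τ := by
  rw [← e_one_fourth, jacobiTheta₂_term, ← e_add, halfThetaTerm, e, e, ← Complex.exp_add]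
  ring_nf

lemma eta3_eq_jacobiTheta₂' {τ : ℂ} (hτ : 0 < τ.im) :
    eta3 τ = e (τ / 8) * (jacobiTheta₂' ((τ + 1) / 2) τ / (2 * π * I)) := by
  have hsum := ((hasSum_jacobiTheta₂'_term ((τ + 1) / 2) hτ).div_const (2 * π * I)).add
    ((hasSum_jacobiTheta₂_term ((τ + 1) / 2) hτ).div_const 2)
  rw [jacobiTheta₂_add_one_div_two, zero_div, add_zero] at hsum
  rw [eta3_eq_tsum, ← hsum.tsum_eq, ← tsum_mul_left, ← tsum_mul_left]
  refine tsum_congr fun m ↦ ?_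
  rw [halfThetaTerm_eq_jacobiTheta₂_term, jacobiTheta₂'_term]
  field_simp
  linear_combination -(2 * m + 1) * e (τ / 8) * jacobiTheta₂_term m ((τ + 1) / 2) τ * I_sq

lemma eta3_add_one (τ : ℂ) : eta3 (τ + 1) = e (1 / 8) * eta3 τ := by
  rw [eta3_eq_tsum, eta3_eq_tsum, mul_left_comm]
  refine congrArg (-I * ·) ((tsum_congr fun m ↦ ?_).trans tsum_mul_left)
  obtain ⟨n, hn⟩ := Int.even_mul_succ_self m
  have hn : (m : ℂ) * (m + 1) = n + n := mod_cast hn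
  have hshift : halfThetaTerm m (τ + 1) = e (n + 1 / 8) * halfThetaTerm m τ := by
    rw [halfThetaTerm, halfThetaTerm, ← e_add]
    congr 1
    linear_combination hn / 2
  rw [hshift, e_add, e_intCast]
  ring

lemma eta3_neg_inv (τ : ℍ) :
    eta3 (-τ : ℂ)⁻¹ = -I * τ * (-I * τ) ^ (1 / 2 : ℂ) * eta3 τ := by
  set τ' : ℂ := (-τ : ℂ)⁻¹ with hτ'
  have hτ0 : (τ : ℂ) ≠ 0 := τ.ne_zero
  have hττ' : -1 / (τ : ℂ) = τ' := by rw [hτ', inv_neg, neg_div, one_div]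
  have hz : ((τ : ℂ) + 1) / 2 / τ = -((τ' + 1) / 2) + 1 := by
    rw [← hττ']
    field_simp
    ring
  have hexp : e ((τ : ℂ) / 8) * cexp (-π * I * (((τ : ℂ) + 1) / 2) ^ 2 / τ) = -I * e (τ' / 8) := by
    rw [← Complex.exp_neg_pi_div_two_mul_I, e, e, ← Complex.exp_add, ← Complex.exp_add, ← hττ']
    congr 1
    field_simp
    ring
  have : (-I * (τ : ℂ)) ^ (1 / 2 : ℂ) ≠ 0 := by simp [hτ0]
  rw [eta3_eq_jacobiTheta₂' τ.im_pos, eta3_eq_jacobiTheta₂' τ.im_inv_neg_coe_pos,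
    jacobiTheta₂'_functional_equation _ (τ : ℂ), hz, hττ', jacobiTheta₂'_add_left,
    jacobiTheta₂'_neg_left, jacobiTheta₂_add_left, jacobiTheta₂_neg_left,
    jacobiTheta₂_add_one_div_two]
  generalize cexp (-π * I * (((τ : ℂ) + 1) / 2) ^ 2 / τ) = ε at hexp ⊢
  generalize jacobiTheta₂' ((τ' + 1) / 2) τ' = θ'
  generalize e (τ' / 8) = ε' at hexp ⊢
  field_simp
  linear_combination (-I * θ') * hexp + ε' * θ' * I_sq

lemma eta3_neg_inv_pow_eight (τ : ℍ) : eta3 (-τ : ℂ)⁻¹ ^ 8 = (τ : ℂ) ^ 12 * eta3 τ ^ 8 := by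
  have hs : ((-I * (τ : ℂ)) ^ (1 / 2 : ℂ)) ^ 8 = (-I * τ) ^ 4 := by
    rw [← Complex.cpow_nat_mul, ← Complex.cpow_natCast]
    norm_num
  have hI : (-I) ^ 12 = 1 := by
    rw [Even.neg_pow (by decide), show 12 = 4 * 3 by rfl, pow_mul, I_pow_four, one_pow]
  rw [eta3_neg_inv, mul_pow, mul_pow, hs]
  linear_combination (τ : ℂ) ^ 12 * eta3 τ ^ 8 * hI

lemma eta3_add_one_pow_eight (τ : ℂ) : eta3 (τ + 1) ^ 8 = eta3 τ ^ 8 := by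
  rw [eta3_add_one, mul_pow, ← e_natCast_mul]
  have hperiod : e ((8 : ℕ) * (1 / 8)) = 1 := by
    rw [show ((8 : ℕ) : ℂ) * (1 / 8) = (1 : ℤ) by norm_num, e_intCast]
  rw [hperiod, one_mul]

lemma e_mul_halfThetaTerm (m : ℤ) (τ : ℂ) :
    e (-τ / 8) * halfThetaTerm m τ = e ((m : ℂ) * (m + 1) / 2 * τ + ((m : ℂ) + 1 / 2) / 2) := by
  rw [halfThetaTerm, ← e_add]
  ring_nf

lemma norm_e_mul_halfThetaTerm (m : ℤ) (τ : ℂ) :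
    ‖e (-τ / 8) * halfThetaTerm m τ‖ = Real.exp (-(π * τ.im) * (m * (m + 1))) := by
  have h := norm_e_ofReal_mul_add ((m : ℝ) * (m + 1) / 2) (((m : ℝ) + 1 / 2) / 2) τ
  push_cast at h
  rw [e_mul_halfThetaTerm, h]
  ring_nf

lemma int_mul_add_one_nonneg (m : ℤ) : 0 ≤ m * (m + 1) := by
  rcases le_or_gt 0 m with hm | hm
  · positivity
  · exact mul_nonneg_of_nonpos_of_nonpos hm.le hm

lemma norm_e_mul_halfThetaTerm_le (m : ℤ) {τ : ℂ} (hτ : 1 ≤ τ.im) :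
    ‖e (-τ / 8) * halfThetaTerm m τ‖ ≤
      Real.exp (π / 4) * Real.exp (-(π * 1) * ((m : ℝ) + 1 / 2) ^ 2) := by
  have hm : (0 : ℝ) ≤ m * (m + 1) := mod_cast int_mul_add_one_nonneg m
  rw [norm_e_mul_halfThetaTerm, ← Real.exp_add, Real.exp_le_exp]
  nlinarith [mul_nonneg (mul_nonneg pi_pos.le (sub_nonneg.2 hτ)) hm]

lemma tendsto_e_mul_eta3_term_atImInfty (m : ℤ) :
    Tendsto (fun τ : ℍ ↦ -I * ((m : ℂ) + 1 / 2) * (e (-(τ : ℂ) / 8) * halfThetaTerm m τ)) atImInfty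
      (𝓝 (if m ∈ ({0, -1} : Finset ℤ) then 1 / 2 else 0)) := by
  split_ifs with hm
  · refine tendsto_const_nhds.congr fun τ ↦ ?_
    rw [e_mul_halfThetaTerm]
    rcases (by simpa using hm : m = 0 ∨ m = -1) with rfl | rfl
    · rw [show ((0 : ℤ) : ℂ) * ((0 : ℤ) + 1) / 2 * τ + ((0 : ℤ) + 1 / 2) / 2 = 1 / 4 by
        push_cast; ring, e_one_fourth]
      push_cast
      linear_combination I_sq / 2
    · rw [show ((-1 : ℤ) : ℂ) * ((-1 : ℤ) + 1) / 2 * τ + ((-1 : ℤ) + 1 / 2) / 2 = -(1 / 4) by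
        push_cast; ring, e_neg, e_one_fourth, inv_I]
      push_cast
      linear_combination I_sq / 2
  · have hpos : (0 : ℝ) < m * (m + 1) := by
      have h : m * (m + 1) ≠ 0 := by
        simp only [Finset.mem_insert, Finset.mem_singleton, not_or] at hm
        exact mul_ne_zero hm.1 fun h ↦ hm.2 (eq_neg_of_add_eq_zero_left h)
      exact_mod_cast (int_mul_add_one_nonneg m).lt_of_ne' h
    suffices Tendsto (fun τ : ℍ ↦ ‖e (-(τ : ℂ) / 8) * halfThetaTerm m τ‖) atImInfty (𝓝 0) by
      simpa only [mul_zero] using (tendsto_zero_iff_norm_tendsto_zero.2 this).const_mul _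
    simp only [norm_e_mul_halfThetaTerm]
    refine Real.tendsto_exp_atBot.comp (Tendsto.atBot_mul_const hpos ?_)
    exact tendsto_neg_atTop_atBot.comp (tendsto_comap.const_mul_atTop pi_pos)

lemma tendsto_e_mul_eta3_atImInfty :
    Tendsto (fun τ : ℍ ↦ e (-(τ : ℂ) / 8) * eta3 τ) atImInfty (𝓝 1) := by
  have hsum : Summable fun m : ℤ ↦ Real.exp (π / 4) *
      (|(m : ℝ) + 1 / 2| * Real.exp (-(π * 1) * ((m : ℝ) + 1 / 2) ^ 2)) :=
    (summable_abs_mul_exp_neg_mul_half_sq one_pos).mul_left _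
  have hlim := tendsto_tsum_of_dominated_convergence hsum tendsto_e_mul_eta3_term_atImInfty ?_
  · rw [tsum_eq_sum (s := {0, -1}) fun m hm ↦ if_neg hm, Finset.sum_ite_mem, Finset.inter_self,
      Finset.sum_pair (by decide), add_halves] at hlim
    refine hlim.congr fun τ ↦ ?_
    rw [eta3_eq_tsum, ← mul_assoc, ← tsum_mul_left]
    exact tsum_congr fun m ↦ by ring
  · filter_upwards [preimage_mem_comap (eventually_ge_atTop 1)] with τ hτ m
    rw [norm_mul, norm_mul, norm_neg, norm_I, one_mul, norm_intCast_add_one_div_two, mul_left_comm]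
    gcongr
    exact norm_e_mul_halfThetaTerm_le m hτ

lemma eta3_pow_eight_slash_S :
    (fun τ : ℍ ↦ eta3 τ ^ 8) ∣[(12 : ℤ)] ModularGroup.S = fun τ : ℍ ↦ eta3 τ ^ 8 := by
  ext τ
  rw [ModularForm.SL_slash_apply, UpperHalfPlane.modular_S_smul, UpperHalfPlane.coe_mk,
    eta3_neg_inv_pow_eight, ModularGroup.denom_S, zpow_neg]
  exact mul_div_cancel_left₀ _ (pow_ne_zero 12 τ.ne_zero)

lemma eta3_pow_eight_slash_T :
    (fun τ : ℍ ↦ eta3 τ ^ 8) ∣[(12 : ℤ)] ModularGroup.T = fun τ : ℍ ↦ eta3 τ ^ 8 := by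
  ext τ
  rw [ModularForm.SL_slash_apply, UpperHalfPlane.modular_T_smul]
  have hdenom : denom ModularGroup.T τ = 1 := by
    simp [denom, ModularGroup.coe_T]
  rw [hdenom, one_zpow, mul_one, coe_vadd, ofReal_one, add_comm, eta3_add_one_pow_eight]

lemma isZeroAtImInfty_eta3_pow_eight : IsZeroAtImInfty fun τ : ℍ ↦ eta3 τ ^ 8 := by
  have hq : Tendsto (fun τ : ℍ ↦ e ((τ : ℂ) / 8)) atImInfty (𝓝 0) := by
    rw [tendsto_zero_iff_norm_tendsto_zero]
    simp only [norm_e]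
    have him : Tendsto (fun τ : ℍ ↦ ((τ : ℂ) / 8).im) atImInfty atTop := by
      simp only [Complex.div_ofNat_im]
      exact tendsto_comap.atTop_div_const (by norm_num)
    exact Real.tendsto_exp_atBot.comp (him.const_mul_atTop_of_neg (by linarith [pi_pos]))
  have hη : Tendsto (fun τ : ℍ ↦ eta3 τ) atImInfty (𝓝 (0 * 1)) :=
    (hq.mul tendsto_e_mul_eta3_atImInfty).congr fun τ ↦ by
      rw [neg_div, e_neg, mul_inv_cancel_left₀ (e_ne_zero _)]
  simpa [IsZeroAtImInfty, ZeroAtFilter] using hη.pow 8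

/-- The eighth power of `η³`, a cusp form of weight 12 and level one. -/
noncomputable def eta3PowEightCuspForm : CuspForm 𝒮ℒ 12 where
  toFun τ := eta3 τ ^ 8
  slash_action_eq' A hA := by
    obtain ⟨A, rfl⟩ := hA
    exact SlashInvariantForm.slash_action_generators_SL2Z eta3_pow_eight_slash_S
      eta3_pow_eight_slash_T A
  holo' := by
    rw [UpperHalfPlane.mdifferentiable_iff]
    refine .congr (fun z hz ↦ ((differentiableAt_eta3 hz).pow 8).differentiableWithinAt)
      fun z hz ↦ ?_
    simp [ofComplex_apply_of_im_pos hz]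
  zero_at_cusps' hc := by
    rw [Subgroup.IsArithmetic.isCusp_iff_isCusp_SL2Z] at hc
    rw [OnePoint.isZeroAt_iff_forall_SL2Z hc]
    intro γ _
    rw [SlashInvariantForm.slash_action_generators_SL2Z eta3_pow_eight_slash_S
      eta3_pow_eight_slash_T]
    exact isZeroAtImInfty_eta3_pow_eight

lemma eta3_ne_zero {τ : ℂ} (hτ : 0 < τ.im) : eta3 τ ≠ 0 := by
  obtain ⟨c, hc⟩ := CuspForm.exists_smul_discriminant_of_weight_eq_twelve eta3PowEightCuspForm
  have hcΔ (z : ℍ) : c * ModularForm.discriminant z = eta3 z ^ 8 := DFunLike.congr_fun hc z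
  have hc0 : c ≠ 0 := by
    rintro rfl
    have hzero (z : ℍ) : eta3 z = 0 := by simpa using (hcΔ z).symm
    simpa [hzero] using tendsto_e_mul_eta3_atImInfty
  have hη : eta3 τ ^ 8 ≠ 0 :=
    hcΔ ⟨τ, hτ⟩ ▸ mul_ne_zero hc0 (ModularForm.discriminant_ne_zero _)
  exact ne_zero_pow (by decide) hη

end EtaCubed

section HolomorphicPart

lemma E2_eq_eisensteinSeries_E2 (τ : UpperHalfPlane) : E2 τ = EisensteinSeries.E2 τ := by
  rw [E2, EisensteinSeries.E2_eq_tsum_cexp, tsum_pnat_eq_tsum_succ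
    (f := fun n ↦ (ArithmeticFunction.sigma 1 n : ℂ) * cexp (2 * π * I * τ) ^ n)]
  congr! 4 with n
  rw [ArithmeticFunction.sigma_one_apply, sigma1, ← Nat.cast_succ, e_natCast_mul, e]

lemma differentiableAt_E2 {τ : ℂ} (hτ : 0 < τ.im) : DifferentiableAt ℂ E2 τ := by
  have hdiff := UpperHalfPlane.mdifferentiable_iff.1 E2_mdifferentiable
  have hnhds : {z : ℂ | 0 < z.im} ∈ 𝓝 τ := (Complex.isOpen_im_gt 0).mem_nhds hτ
  refine (hdiff.differentiableAt hnhds).congr_of_eventuallyEq ?_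
  filter_upwards [hnhds] with z hz
  rw [Function.comp_apply, UpperHalfPlane.ofComplex_apply_of_im_pos hz,
    ← E2_eq_eisensteinSeries_E2]

/-- The summand of index `m` of `i η³(τ) g⁺_τ(x)`; it vanishes unless `|x| < m + 1/2`. -/
noncomputable def gplusTerm (x : ℝ) (m : ℤ) (τ : ℂ) : ℂ :=
  (Real.sign x : ℂ) * (e (-(x : ℂ) ^ 2 * τ / 2) *
    if |x| < (m : ℝ) + 1 / 2 then (((m : ℝ) + 1 / 2 - |x| : ℝ) : ℂ) * halfThetaTerm m τ else 0)

lemma gplus_eq_inv_mul_tsum (τ : ℂ) (x : ℝ) :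
    gplus τ x = (I * eta3 τ)⁻¹ * ∑' m : ℤ, gplusTerm x m τ := by
  unfold gplusTerm halfThetaTerm
  rw [tsum_mul_left, tsum_mul_left, gplus, div_eq_mul_inv]
  ring

lemma differentiable_gplusTerm (x : ℝ) (m : ℤ) : Differentiable ℂ (gplusTerm x m) := by
  have he : Differentiable ℂ fun τ : ℂ ↦ e (-(x : ℂ) ^ 2 * τ / 2) :=
    differentiable_e.comp (by fun_prop)
  have hθ := differentiable_halfThetaTerm m
  unfold gplusTerm
  split_ifs <;> fun_prop

lemma norm_realSign_le_one (x : ℝ) : ‖(Real.sign x : ℂ)‖ ≤ 1 := by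
  rw [Complex.norm_real]
  rcases Real.sign_apply_eq x with h | h | h <;> simp [h]

lemma neg_gaussian_exponent_le_of_gap {v w c x μ : ℝ} (hv : 0 ≤ v) (hvw : v ≤ w) (hc : 0 ≤ c)
    (hgap : c ≤ μ - |x|) :
    w * x ^ 2 - w * μ ^ 2 ≤ -(v * c) * μ + -(v * c) * |x| := by
  have : 0 ≤ μ - |x| := hc.trans hgap
  have hw : 0 ≤ w := hv.trans hvw
  have hsum : 0 ≤ μ + |x| := by linarith [abs_nonneg x]
  calc w * x ^ 2 - w * μ ^ 2 = -(w * (μ - |x|) * (μ + |x|)) := by rw [← sq_abs x]; ring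
    _ ≤ -(v * c * (μ + |x|)) := by gcongr
    _ = _ := by ring

lemma norm_gplusTerm_le {c v x : ℝ} {m : ℤ} {τ : ℂ} (hc : 0 < c) (hv : 0 < v) (hτ : v ≤ τ.im)
    (hgap : |x| < (m : ℝ) + 1 / 2 → c ≤ (m : ℝ) + 1 / 2 - |x|) :
    ‖gplusTerm x m τ‖ ≤ (|(m : ℝ) + 1 / 2| * Real.exp (-(π * v * c) * |(m : ℝ) + 1 / 2|)) *
      Real.exp (-(π * v * c) * |x|) := by
  unfold gplusTerm
  split_ifs with h
  · have hgap := hgap h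
    have hexp := neg_gaussian_exponent_le_of_gap (mul_pos pi_pos hv).le
      (mul_le_mul_of_nonneg_left hτ pi_pos.le) hc.le hgap
    rw [norm_mul, norm_mul, norm_mul, norm_e_neg_sq_mul_div_two, norm_halfThetaTerm,
      Complex.norm_real (_ - _), Real.norm_of_nonneg (hc.le.trans hgap),
      abs_of_pos ((abs_nonneg x).trans_lt h)]
    set μ := (m : ℝ) + 1 / 2
    calc ‖(Real.sign x : ℂ)‖ * (Real.exp (π * τ.im * x ^ 2) *
          ((μ - |x|) * Real.exp (-(π * τ.im) * μ ^ 2)))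
        ≤ 1 * (Real.exp (π * τ.im * x ^ 2) * (μ * Real.exp (-(π * τ.im) * μ ^ 2))) := by
          gcongr
          · exact norm_realSign_le_one x
          · exact sub_le_self _ (abs_nonneg x)
      _ = μ * Real.exp (π * τ.im * x ^ 2 - π * τ.im * μ ^ 2) := by
          rw [sub_eq_add_neg, Real.exp_add]
          ring_nf
      _ ≤ μ * Real.exp (-(π * v * c) * μ + -(π * v * c) * |x|) := by
          have : 0 ≤ μ := (abs_nonneg x).trans h.le
          gcongr
      _ = _ := by rw [Real.exp_add, ← mul_assoc]
  · rw [mul_zero, mul_zero, norm_zero]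
    positivity

lemma exists_pos_le_intCast_sub (t : ℝ) : ∃ c > 0, ∀ k : ℤ, t < k → c ≤ k - t := by
  refine ⟨⌊t⌋ + 1 - t, sub_pos.2 (Int.lt_floor_add_one t), fun k hk ↦ ?_⟩
  have : ((⌊t⌋ + 1 : ℤ) : ℝ) ≤ k := mod_cast Int.floor_lt.2 hk
  push_cast at this
  gcongr

lemma exists_pos_le_half_int_sub_abs (ℓ : ℤ) (h : ℝ) : ∃ c > 0, ∀ n m : ℤ,
    |(ℓ : ℝ) * n + h| < (m : ℝ) + 1 / 2 → c ≤ (m : ℝ) + 1 / 2 - |(ℓ : ℝ) * n + h| := by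
  obtain ⟨c₁, hc₁, hgap₁⟩ := exists_pos_le_intCast_sub (h - 1 / 2)
  obtain ⟨c₂, hc₂, hgap₂⟩ := exists_pos_le_intCast_sub (-h - 1 / 2)
  refine ⟨min c₁ c₂, lt_min hc₁ hc₂, fun n m hlt ↦ ?_⟩
  obtain ⟨hlt₂, hlt₁⟩ := abs_lt.1 hlt
  have h₁ := hgap₁ (m - ℓ * n) (by push_cast; linarith)
  have h₂ := hgap₂ (m + ℓ * n) (by push_cast; linarith)
  push_cast at h₁ h₂
  rcases abs_choice ((ℓ : ℝ) * n + h) with h' | h' <;> rw [h']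
  · exact (min_le_left _ _).trans (by linarith)
  · exact (min_le_right _ _).trans (by linarith)

lemma summable_abs_mul_exp_neg_mul_abs_half {a : ℝ} (ha : 0 < a) :
    Summable fun m : ℤ ↦ |(m : ℝ) + 1 / 2| * Real.exp (-a * |(m : ℝ) + 1 / 2|) := by
  simpa only [one_mul, pow_one] using
    summable_abs_pow_mul_exp_neg_mul_abs ha 1 one_ne_zero (1 / 2)

lemma exists_norm_gplusTerm_le (ℓ : ℤ) (h : ℝ) {v : ℝ} (hv : 0 < v) :
    ∃ a > 0, ∀ (n m : ℤ) (τ : ℂ), v < τ.im → ‖gplusTerm (ℓ * n + h) m τ‖ ≤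
      (|(m : ℝ) + 1 / 2| * Real.exp (-a * |(m : ℝ) + 1 / 2|)) * Real.exp (-a * |ℓ * n + h|) := by
  obtain ⟨c, hc, hgap⟩ := exists_pos_le_half_int_sub_abs ℓ h
  exact ⟨π * v * c, by positivity, fun n m τ hτ ↦ norm_gplusTerm_le hc hv hτ.le (hgap n m)⟩

lemma differentiableOn_tsum_gplusTerm (ℓ : ℤ) (h : ℝ) {v : ℝ} (hv : 0 < v) (n : ℤ) :
    DifferentiableOn ℂ (fun τ ↦ ∑' m : ℤ, gplusTerm (ℓ * n + h) m τ) {w | v < w.im} := by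
  obtain ⟨a, ha, hbound⟩ := exists_norm_gplusTerm_le ℓ h hv
  exact Complex.differentiableOn_tsum_of_summable_norm
    ((summable_abs_mul_exp_neg_mul_abs_half ha).mul_right _)
    (fun m ↦ (differentiable_gplusTerm _ m).differentiableOn) (Complex.isOpen_im_gt v) (hbound n)

variable {ℓ : ℤ} (hℓ : ℓ ≠ 0) (h : ℝ)

include hℓ in
lemma exists_summable_norm_tsum_gplusTerm_le {v : ℝ} (hv : 0 < v) :
    ∃ u : ℤ → ℝ, Summable u ∧
      ∀ (n : ℤ) (τ : ℂ), v < τ.im → ‖∑' m : ℤ, gplusTerm (ℓ * n + h) m τ‖ ≤ u n := by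
  obtain ⟨a, ha, hbound⟩ := exists_norm_gplusTerm_le ℓ h hv
  have hsum_m := summable_abs_mul_exp_neg_mul_abs_half ha
  have hsum_n := summable_abs_pow_mul_exp_neg_mul_abs ha 0 (Int.cast_ne_zero.2 hℓ) h
  simp only [pow_zero, one_mul] at hsum_n
  exact ⟨_, hsum_n.mul_left _, fun n τ hτ ↦
    tsum_of_norm_bounded (hsum_m.hasSum.mul_right _) fun m ↦ hbound n m τ hτ⟩

include hℓ in
lemma summable_gplus {τ : ℂ} (hτ : 0 < τ.im) : Summable fun n : ℤ ↦ gplus τ (ℓ * n + h) := by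
  obtain ⟨u, hu, hbound⟩ := exists_summable_norm_tsum_gplusTerm_le hℓ h (half_pos hτ)
  simp only [gplus_eq_inv_mul_tsum]
  exact .mul_left _ (.of_norm_bounded hu fun n ↦ hbound n τ (half_lt_self hτ))

include hℓ in
lemma differentiableAt_tsum_gplus {τ : ℂ} (hτ : 0 < τ.im) :
    DifferentiableAt ℂ (fun τ ↦ ∑' n : ℤ, gplus τ (ℓ * n + h)) τ := by
  simp only [gplus_eq_inv_mul_tsum, tsum_mul_left]
  refine .mul (((differentiableAt_eta3 hτ).const_mul _).inv
    (mul_ne_zero I_ne_zero (eta3_ne_zero hτ))) ?_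
  refine differentiableAt_of_forall_differentiableOn_lt_im (fun v hv ↦ ?_) hτ
  obtain ⟨u, hu, hbound⟩ := exists_summable_norm_tsum_gplusTerm_le hℓ h hv
  exact Complex.differentiableOn_tsum_of_summable_norm hu
    (differentiableOn_tsum_gplusTerm ℓ h hv) (Complex.isOpen_im_gt v) hbound

end HolomorphicPart

section ComplementaryErrorFunction

lemma integrable_exp_neg_sq : Integrable fun t : ℝ ↦ Real.exp (-t ^ 2) := by
  simpa using integrable_exp_neg_mul_sq (b := 1) one_pos

lemma hasDerivAt_erfc (y : ℝ) : HasDerivAt erfc (-(2 / √π) * Real.exp (-y ^ 2)) y := by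
  have herfc : erfc = fun y ↦ 2 / √π *
      ((∫ t in Ioi (0 : ℝ), Real.exp (-t ^ 2)) - ∫ t in (0 : ℝ)..y, Real.exp (-t ^ 2)) := by
    funext y
    rw [erfc, ← intervalIntegral.integral_Ioi_sub_Ioi' integrable_exp_neg_sq.integrableOn
      integrable_exp_neg_sq.integrableOn, sub_sub_cancel]
  have hcont : Continuous fun t : ℝ ↦ Real.exp (-t ^ 2) := by fun_prop
  rw [herfc, neg_mul_comm]
  exact ((hcont.integral_hasStrictDerivAt 0 y).hasDerivAt.const_sub _).const_mul _

lemma erfc_nonneg (y : ℝ) : 0 ≤ erfc y :=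
  mul_nonneg (by positivity) (integral_nonneg fun t ↦ (Real.exp_pos _).le)

lemma erfc_le_two_mul_exp_neg_sq {y : ℝ} (hy : 0 ≤ y) : erfc y ≤ 2 * Real.exp (-y ^ 2) := by
  have hint : Integrable fun t : ℝ ↦ Real.exp (-y ^ 2) * Real.exp (-(t - y) ^ 2) :=
    (integrable_exp_neg_sq.comp_sub_right y).const_mul _
  have htail : ∫ t in Ioi y, Real.exp (-t ^ 2) ≤ Real.exp (-y ^ 2) * √π := by
    calc ∫ t in Ioi y, Real.exp (-t ^ 2)
        ≤ ∫ t in Ioi y, Real.exp (-y ^ 2) * Real.exp (-(t - y) ^ 2) := by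
          refine setIntegral_mono_on integrable_exp_neg_sq.integrableOn hint.integrableOn
            measurableSet_Ioi fun t (ht : y < t) ↦ ?_
          rw [← Real.exp_add, Real.exp_le_exp]
          nlinarith [mul_nonneg hy (sub_nonneg.2 ht.le)]
      _ ≤ ∫ t, Real.exp (-y ^ 2) * Real.exp (-(t - y) ^ 2) :=
          setIntegral_le_integral hint (.of_forall fun t ↦ by positivity)
      _ = Real.exp (-y ^ 2) * √π := by
          rw [integral_const_mul, integral_sub_right_eq_self fun t : ℝ ↦ Real.exp (-t ^ 2)]
          simpa using integral_gaussian 1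
  calc erfc y ≤ 2 / √π * (Real.exp (-y ^ 2) * √π) := by
        unfold erfc
        gcongr
    _ = 2 * Real.exp (-y ^ 2) := by field_simp

lemma sq_sqrt_two_pi_mul_mul_abs (x : ℝ) {v : ℝ} (hv : 0 ≤ v) :
    (√(2 * π * v) * |x|) ^ 2 = 2 * π * v * x ^ 2 := by
  rw [mul_pow, Real.sq_sqrt (by positivity), sq_abs]

lemma hasDerivAt_erfc_sqrt_mul_abs (x : ℝ) {v : ℝ} (hv : 0 < v) :
    HasDerivAt (fun v ↦ erfc (√(2 * π * v) * |x|))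
      (-(√2 * |x| / √v) * Real.exp (-(2 * π * v * x ^ 2))) v := by
  have hsqrt : HasDerivAt (fun v ↦ √(2 * π * v) * |x|)
      ((2 * π * 1) / (2 * √(2 * π * v)) * |x|) v :=
    (((hasDerivAt_id v).const_mul (2 * π)).sqrt (by simpa using hv.ne')).mul_const _
  refine ((hasDerivAt_erfc _).comp v hsqrt).congr_deriv ?_
  rw [sq_sqrt_two_pi_mul_mul_abs x hv.le, Real.sqrt_mul (by positivity),
    Real.sqrt_mul (by positivity)]
  have hπ : √π ^ 2 = π := Real.sq_sqrt pi_pos.le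
  have h2 : √2 ^ 2 = 2 := Real.sq_sqrt zero_le_two
  have hv' : √v ≠ 0 := (Real.sqrt_pos.2 hv).ne'
  field_simp
  rw [hπ, h2]
  ring

end ComplementaryErrorFunction

section NonholomorphicPart

open ComplexConjugate

lemma realSign_mul_abs (x : ℝ) : Real.sign x * |x| = x := by
  rcases lt_trichotomy x 0 with h | rfl | h
  · rw [Real.sign_of_neg h, abs_of_neg h, neg_one_mul, neg_neg]
  · simp
  · rw [Real.sign_of_pos h, abs_of_pos h, one_mul]

lemma norm_gstar_le (x : ℝ) {τ : ℂ} (hτ : 0 < τ.im) :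
    ‖gstar τ x‖ ≤ Real.exp (-(π * τ.im) * x ^ 2) := by
  have herfc := erfc_le_two_mul_exp_neg_sq (y := √(2 * π * τ.im) * |x|) (by positivity)
  rw [sq_sqrt_two_pi_mul_mul_abs x hτ.le] at herfc
  rw [gstar, norm_mul, norm_mul, norm_e_neg_sq_mul_div_two, norm_div, Complex.norm_two,
    Complex.norm_real (erfc _), Real.norm_of_nonneg (erfc_nonneg _)]
  calc Real.exp (π * τ.im * x ^ 2) * (‖(Real.sign x : ℂ)‖ / 2) * erfc (√(2 * π * τ.im) * |x|)
      ≤ Real.exp (π * τ.im * x ^ 2) * (1 / 2) * (2 * Real.exp (-(2 * π * τ.im * x ^ 2))) := by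
        gcongr
        · exact erfc_nonneg _
        · exact norm_realSign_le_one x
    _ = Real.exp (π * τ.im * x ^ 2 + -(2 * π * τ.im * x ^ 2)) := by
        rw [Real.exp_add]
        ring
    _ = Real.exp (-(π * τ.im) * x ^ 2) := by ring_nf

lemma conj_e_ofReal_mul (t : ℝ) (τ : ℂ) :
    conj (e (t * τ)) = e (-(t * τ)) * Real.exp (-(4 * π * τ.im * t)) := by
  have hconj : conj τ = τ - 2 * τ.im * I := by
    rw [eq_sub_iff_add_eq', ← eq_sub_iff_add_eq, Complex.sub_conj]
    push_cast
    ring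
  rw [e, e, ← Complex.exp_conj, Complex.ofReal_exp, ← Complex.exp_add]
  congr 1
  simp only [map_mul, Complex.conj_I, Complex.conj_ofReal, map_ofNat, hconj]
  push_cast
  linear_combination 4 * π * τ.im * t * I_sq

/-- The coefficient of `dv` in the differential of `τ ↦ g*_τ(x)` that comes from the factor
`erfc`; it is `-2i ∂g*_τ(x)/∂τ̄`. -/
noncomputable def gstarImCoeff (x : ℝ) (τ : ℂ) : ℂ :=
  -(x / (√2 * √τ.im)) * conj (e (((x ^ 2 / 2 : ℝ) : ℂ) * τ))

lemma gstarImCoeff_eq (x : ℝ) (τ : ℂ) :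
    gstarImCoeff x τ = e (-(x : ℂ) ^ 2 * τ / 2) * ((Real.sign x : ℂ) / 2) *
      ((-(√2 * |x| / √τ.im) * Real.exp (-(2 * π * τ.im * x ^ 2)) : ℝ) : ℂ) := by
  have hexp : -(4 * π * τ.im * (x ^ 2 / 2)) = -(2 * π * τ.im * x ^ 2) := by ring
  have harg : -(((x ^ 2 / 2 : ℝ) : ℂ) * τ) = -(x : ℂ) ^ 2 * τ / 2 := by
    push_cast
    ring
  have hcoeff : -(x / (√2 * √τ.im)) = Real.sign x / 2 * -(√2 * |x| / √τ.im) := by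
    nth_rw 1 [← realSign_mul_abs x]
    field_simp
    rw [Real.sq_sqrt zero_le_two]
  rw [gstarImCoeff, conj_e_ofReal_mul, hexp, harg, ← Complex.ofReal_mul, ← Complex.ofReal_div,
    ← Complex.ofReal_neg, hcoeff]
  push_cast
  ring

/-- The real differential of `τ ↦ g*_τ(x)`. -/
noncomputable def gstarFDeriv (x : ℝ) (τ : ℂ) : ℂ →L[ℝ] ℂ :=
  (-(π * I * x ^ 2) * gstar τ x) • ContinuousLinearMap.id ℝ ℂ +
    gstarImCoeff x τ • ofRealCLM.comp imCLM

lemma gstarFDeriv_apply (x : ℝ) (τ z : ℂ) :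
    gstarFDeriv x τ z = -(π * I * x ^ 2) * gstar τ x * z + gstarImCoeff x τ * z.im := rfl

lemma hasFDerivAt_gstar (x : ℝ) {τ : ℂ} (hτ : 0 < τ.im) :
    HasFDerivAt (fun τ ↦ gstar τ x) (gstarFDeriv x τ) τ := by
  have hexp : HasDerivAt (fun τ : ℂ ↦ e (-(x : ℂ) ^ 2 * τ / 2) * ((Real.sign x : ℂ) / 2))
      (e (-(x : ℂ) ^ 2 * τ / 2) * (2 * π * I * (-(x : ℂ) ^ 2 * 1 / 2)) * (Real.sign x / 2)) τ :=
    ((((hasDerivAt_id τ).const_mul _).div_const 2).const_mul (2 * π * I)).cexp.mul_const _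
  have herfc : HasFDerivAt (fun τ : ℂ ↦ (erfc (√(2 * π * τ.im) * |x|) : ℂ))
      (ofRealCLM.comp ((-(√2 * |x| / √τ.im) * Real.exp (-(2 * π * τ.im * x ^ 2))) • imCLM)) τ :=
    ofRealCLM.hasFDerivAt.comp τ
      ((hasDerivAt_erfc_sqrt_mul_abs x hτ).comp_hasFDerivAt τ imCLM.hasFDerivAt)
  refine ((hexp.hasFDerivAt.restrictScalars ℝ).mul herfc).congr_fderiv ?_
  ext z
  rw [gstarFDeriv_apply, gstarImCoeff_eq, gstar]
  simp only [neg_mul, ContinuousLinearMap.comp_smulₛₗ, ringHom_apply, neg_smul, smul_neg, mul_one,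
    coe_smul, add_apply, neg_apply, smul_apply, ContinuousLinearMap.comp_apply, imCLM_apply,
    ofRealCLM_apply, real_smul, ofReal_mul, ofReal_div, ofReal_exp, ofReal_neg, ofReal_ofNat,
    ofReal_pow, smul_eq_mul, ContinuousLinearMap.coe_restrictScalars',
    ContinuousLinearMap.toSpanSingleton_apply, mul_neg]
  ring

lemma norm_gstarImCoeff_le (x : ℝ) {v : ℝ} (hv : 0 < v) {τ : ℂ} (hτ : v ≤ τ.im) :
    ‖gstarImCoeff x τ‖ ≤ (√v)⁻¹ * (|x| * Real.exp (-(π * v) * x ^ 2)) := by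
  rw [gstarImCoeff, norm_mul, norm_neg, norm_div, norm_mul, RCLike.norm_conj, norm_e,
    Complex.im_ofReal_mul, Complex.norm_real, Complex.norm_real, Complex.norm_real,
    Real.norm_eq_abs, Real.norm_of_nonneg (Real.sqrt_nonneg _),
    Real.norm_of_nonneg (Real.sqrt_nonneg _)]
  calc |x| / (√2 * √τ.im) * Real.exp (-2 * π * (x ^ 2 / 2 * τ.im))
      = |x| / (√2 * √τ.im) * Real.exp (-(π * τ.im) * x ^ 2) := by ring_nf
    _ ≤ |x| / (1 * √v) * Real.exp (-(π * v) * x ^ 2) := by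
        gcongr
        exact Real.one_le_sqrt.2 one_le_two
    _ = (√v)⁻¹ * (|x| * Real.exp (-(π * v) * x ^ 2)) := by ring

lemma norm_gstarFDeriv_le (x : ℝ) {v : ℝ} (hv : 0 < v) {τ : ℂ} (hτ : v ≤ τ.im) :
    ‖gstarFDeriv x τ‖ ≤ π * (|x| ^ 2 * Real.exp (-(π * v) * x ^ 2)) +
      (√v)⁻¹ * (|x| ^ 1 * Real.exp (-(π * v) * x ^ 2)) := by
  have hgstar : ‖gstar τ x‖ ≤ Real.exp (-(π * v) * x ^ 2) :=
    (norm_gstar_le x (hv.trans_le hτ)).trans (by gcongr)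
  have hid : ‖-(π * I * x ^ 2) * gstar τ x‖ ≤ π * (|x| ^ 2 * Real.exp (-(π * v) * x ^ 2)) := by
    rw [norm_mul, norm_neg, norm_mul, norm_mul, norm_pow, norm_I, Complex.norm_real,
      Complex.norm_real, Real.norm_eq_abs, Real.norm_eq_abs, abs_of_pos pi_pos, mul_one, mul_assoc]
    gcongr
  have him := norm_gstarImCoeff_le x hv hτ
  rw [pow_one]
  refine ContinuousLinearMap.opNorm_le_bound _ (by positivity) fun z ↦ ?_
  rw [gstarFDeriv_apply, add_mul]
  refine norm_add_le_of_le (norm_mul_le_of_le hid le_rfl) (norm_mul_le_of_le him ?_)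
  rw [Complex.norm_real]
  exact Complex.abs_im_le_norm z

variable {ℓ : ℝ} (hℓ : ℓ ≠ 0) (h : ℝ)

include hℓ in
lemma summable_gstar {τ : ℂ} (hτ : 0 < τ.im) : Summable fun n : ℤ ↦ gstar τ (ℓ * n + h) := by
  refine .of_norm_bounded
    (summable_abs_pow_mul_exp_neg_mul_sq (mul_pos pi_pos hτ) 0 hℓ h) fun n ↦ ?_
  rw [pow_zero, one_mul]
  exact norm_gstar_le _ hτ

include hℓ in
lemma exists_summable_norm_gstarFDeriv_le {v : ℝ} (hv : 0 < v) : ∃ u : ℤ → ℝ, Summable u ∧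
    ∀ (n : ℤ) (τ : ℂ), v ≤ τ.im → ‖gstarFDeriv (ℓ * n + h) τ‖ ≤ u n :=
  ⟨_, ((summable_abs_pow_mul_exp_neg_mul_sq (mul_pos pi_pos hv) 2 hℓ h).mul_left π).add
    ((summable_abs_pow_mul_exp_neg_mul_sq (mul_pos pi_pos hv) 1 hℓ h).mul_left (√v)⁻¹),
    fun _ _ hτ ↦ norm_gstarFDeriv_le _ hv hτ⟩

include hℓ in
lemma summable_gstarFDeriv {τ : ℂ} (hτ : 0 < τ.im) :
    Summable fun n : ℤ ↦ gstarFDeriv (ℓ * n + h) τ := by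
  obtain ⟨u, hu, hbound⟩ := exists_summable_norm_gstarFDeriv_le hℓ h hτ
  exact .of_norm_bounded hu fun n ↦ hbound n τ le_rfl

include hℓ in
lemma hasFDerivAt_tsum_gstar {τ : ℂ} (hτ : 0 < τ.im) :
    HasFDerivAt (fun τ ↦ ∑' n : ℤ, gstar τ (ℓ * n + h))
      (∑' n : ℤ, gstarFDeriv (ℓ * n + h) τ) τ := by
  have hv := half_pos hτ
  have hmem : τ ∈ {w : ℂ | τ.im / 2 < w.im} := half_lt_self hτ
  obtain ⟨u, hu, hbound⟩ := exists_summable_norm_gstarFDeriv_le hℓ h hv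
  exact hasFDerivAt_tsum_of_isPreconnected hu (Complex.isOpen_im_gt _)
    (convex_halfSpace_im_gt _).isPreconnected (fun n w hw ↦ hasFDerivAt_gstar _ (hv.trans hw))
    (fun n w hw ↦ hbound n w (le_of_lt hw)) hmem (summable_gstar hℓ h hτ) hmem

end NonholomorphicPart

section Xi

variable {k : ℝ} {τ : ℂ} {f : ℂ → ℂ}

lemma xi_congr {g : ℂ → ℂ} (hfg : f =ᶠ[𝓝 τ] g) : xi k f τ = xi k g τ := by
  rw [xi, xi, hfg.fderiv_eq]

lemma xi_sub_of_differentiableAt {H : ℂ → ℂ} (hH : DifferentiableAt ℂ H τ)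
    (hf : DifferentiableAt ℝ f τ) : xi k (fun w ↦ H w - f w) τ = -xi k f τ := by
  have hcr : fderiv ℝ H τ 1 + I * fderiv ℝ H τ I = 0 := by
    rw [hH.fderiv_restrictScalars ℝ, ContinuousLinearMap.coe_restrictScalars',
      fderiv_eq_smul_deriv, fderiv_eq_smul_deriv, smul_eq_mul, smul_eq_mul]
    linear_combination deriv H τ * I_sq
  have hsub : fderiv ℝ (fun w ↦ H w - f w) τ 1 + I * fderiv ℝ (fun w ↦ H w - f w) τ I =
      -(fderiv ℝ f τ 1 + I * fderiv ℝ f τ I) := by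
    rw [fderiv_fun_sub (hH.restrictScalars ℝ) hf, sub_apply,
      sub_apply]
    linear_combination hcr
  rw [xi, xi, hsub, mul_neg, map_neg, mul_neg]

lemma xi_tsum {ι : Type*} {F : ι → ℂ → ℂ} {F' : ι → ℂ →L[ℝ] ℂ} (hF' : Summable F')
    (hF : ∀ i, HasFDerivAt (F i) (F' i) τ)
    (hsum : HasFDerivAt (fun w ↦ ∑' i, F i w) (∑' i, F' i) τ) :
    xi k (fun w ↦ ∑' i, F i w) τ = ∑' i, xi k (F i) τ := by
  have happly (z : ℂ) : HasSum (F' · z) ((∑' i, F' i) z) :=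
    hF'.hasSum.mapL (ContinuousLinearMap.apply ℝ ℂ z)
  simp only [xi, hsum.fderiv, (hF _).fderiv]
  rw [← ((happly 1).add ((happly I).mul_left I)).tsum_eq, ← tsum_mul_left, Complex.conj_tsum,
    ← tsum_mul_left]

lemma xi_gstar (x : ℝ) (hτ : 0 < τ.im) : xi (1 / 2) (fun τ ↦ gstar τ x) τ =
    -(1 / (√2 : ℂ) * (x * e (((x ^ 2 / 2 : ℝ) : ℂ) * τ))) := by
  have hdbar : gstarFDeriv x τ 1 + I * gstarFDeriv x τ I = I * gstarImCoeff x τ := by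
    rw [gstarFDeriv_apply, gstarFDeriv_apply, one_im, I_im]
    push_cast
    linear_combination -(π * I * x ^ 2) * gstar τ x * I_sq
  have hv : (√τ.im : ℂ) ≠ 0 := ofReal_ne_zero.2 (Real.sqrt_pos.2 hτ).ne'
  rw [xi, (hasFDerivAt_gstar x hτ).fderiv, hdbar, ← Real.sqrt_eq_rpow, gstarImCoeff]
  simp only [map_mul, map_neg, map_div₀, conj_I, Complex.conj_conj, conj_ofReal, map_one,
    map_ofNat]
  field_simp
  linear_combination x * e (((x ^ 2 / 2 : ℝ) : ℂ) * τ) * I_sq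

end Xi

section Completion

/-- The holomorphic part of `ϑ̃_{N,h}`, obtained by replacing `g` with `g⁺`. -/
noncomputable def tvthetaPlus (N : ℕ) (h : ℝ) (τ : ℂ) : ℂ :=
  (if ∃ m : ℤ, h = (m : ℝ) + 1 / 2 then
    e ((h : ℂ) / 2) * E2 τ / (12 * (N : ℂ) * I * eta3 τ) else 0) +
    ∑' n : ℤ, gplus τ ((N : ℝ) * n + h)

variable {N : ℕ} (hN : 0 < N) (h : ℝ) {τ : ℂ} (hτ : 0 < τ.im)

include hN hτ

lemma differentiableAt_tvthetaPlus : DifferentiableAt ℂ (tvthetaPlus N h) τ := by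
  have hN0 : (N : ℂ) ≠ 0 := Nat.cast_ne_zero.2 hN.ne'
  have hgplus := differentiableAt_tsum_gplus (Int.natCast_ne_zero.2 hN.ne') h hτ
  simp only [Int.cast_natCast] at hgplus
  refine .add ?_ hgplus
  split_ifs
  · refine ((differentiableAt_E2 hτ).const_mul _).div ((differentiableAt_eta3 hτ).const_mul _) ?_
    simp [hN0, eta3_ne_zero hτ]
  · exact differentiableAt_const _

lemma tvtheta_eq_tvthetaPlus_sub :
    tvtheta N h τ = tvthetaPlus N h τ - ∑' n : ℤ, gstar τ ((N : ℝ) * n + h) := by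
  have hgplus := summable_gplus (Int.natCast_ne_zero.2 hN.ne') h hτ
  simp only [Int.cast_natCast] at hgplus
  have hgstar := summable_gstar (Nat.cast_ne_zero.2 hN.ne') h hτ
  simp only [tvtheta, tvthetaPlus, gfun, hgplus.tsum_sub hgstar, add_sub_assoc]

lemma tvtheta_eventuallyEq_tvthetaPlus_sub :
    tvtheta N h =ᶠ[𝓝 τ] fun w ↦ tvthetaPlus N h w - ∑' n : ℤ, gstar w ((N : ℝ) * n + h) := by
  filter_upwards [(Complex.isOpen_im_gt 0).mem_nhds hτ] with w hw
  exact tvtheta_eq_tvthetaPlus_sub hN h hw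

end Completion

theorem xi_tvtheta_general (N : ℕ) (hN : 0 < N) (h : ℝ) (τ : ℂ) (hτ : 0 < τ.im) :
    xi (1/2) (tvtheta N h) τ =
      (1 / (Real.sqrt 2 : ℂ)) *
        ∑' n : ℤ, (((N : ℝ) * n + h : ℝ) : ℂ) *
          e (((((N : ℝ) * n + h)^2 / 2 : ℝ) : ℂ) * τ) := by
  have hN0 : (N : ℝ) ≠ 0 := Nat.cast_ne_zero.2 hN.ne'
  have hgstar := hasFDerivAt_tsum_gstar hN0 h hτ
  calc xi (1 / 2) (tvtheta N h) τ
      = -xi (1 / 2) (fun w ↦ ∑' n : ℤ, gstar w (N * n + h)) τ := by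
        rw [xi_congr (tvtheta_eventuallyEq_tvthetaPlus_sub hN h hτ), xi_sub_of_differentiableAt
          (differentiableAt_tvthetaPlus hN h hτ) hgstar.differentiableAt]
    _ = -∑' n : ℤ, xi (1 / 2) (fun w ↦ gstar w (N * n + h)) τ := by
        rw [xi_tsum (summable_gstarFDeriv hN0 h hτ) (fun n ↦ hasFDerivAt_gstar _ hτ) hgstar]
    _ = _ := by
        simp only [xi_gstar _ hτ, tsum_neg, neg_neg, tsum_mul_left]

/-- `ξ_{1/2} ϑ̃_{N,h} = (1/√2)·𝛉_{N,h}`. -/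
theorem xi_tvtheta (N : ℕ) (hN : 0 < N) (hNe : Even N) (h : ℝ)
    (hh : ∃ k : ℤ, h = (k : ℝ) / N) (τ : ℂ) (hτ : 0 < τ.im) :
    xi (1/2) (tvtheta N h) τ =
      (1 / (Real.sqrt 2 : ℂ)) *
        ∑' n : ℤ, (((N : ℝ) * n + h : ℝ) : ℂ) *
          e (((((N : ℝ) * n + h)^2 / 2 : ℝ) : ℂ) * τ) :=
  xi_tvtheta_general N hN h τ hτ
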